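/- Let λ > 1 and let ρ be a probability density on the d-dimensional torus T^d with 1/λ ≤ ρ ≤ λ (as holds for the solution ρ̄_t of the McKean–Vlasov equation at every time t ≥ 0, under the assumptions on K and ρ̄₀). Then for every positive smooth function f on T^d: Ent_ρ(f) ≤ (λ²/(8π²)) ∫_{T^d} (|∇f|²/f) ρ(x) dx. -/

import Mathlib

open MeasureTheory Real Set

noncomputable section

/-!
On the circle, let `u` solve the heat equation with initial datum `f`. The entropy of `u` decreases
at the rate of the Fisher information `∫ u'² / u` (de Bruijn). The Fisher information in turn
decreases at a rate which, integrating by parts, is at least `8 ∫ ((√u)'')²`, and Wirtinger's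
inequality for `(√u)'` bounds this below by a multiple of the Fisher information itself. Hence
entropy minus a multiple of Fisher information increases along the flow, and as the entropy of `u`
tends to zero this difference is nonpositive initially: the sharp inequality for the uniform
density. Subadditivity of the entropy over product measures carries it to the cube, and the
Holley–Stroock perturbation principle to a density lying between two positive constants.
-/

open ProbabilityTheory InformationTheory Filter Function
open scoped NNReal ENNReal

section Entropy

variable {α β : Type*} [MeasurableSpace α] [MeasurableSpace β] {μ : Measure α} {ν : Measure β}

/-- The entropy `∫ f log f dμ - (∫ f dμ) log (∫ f dμ)` of a function `f` with respect to a
measure `μ`; for `μ = ρ dx` this is `Ent_ρ(f)`. -/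
def entropy (μ : Measure α) (f : α → ℝ) : ℝ :=
  ∫ x, f x * log (f x) ∂μ - (∫ x, f x ∂μ) * log (∫ x, f x ∂μ)

lemma integral_comp_of_measurePreserving {φ : α → β} (hφ : MeasurePreserving φ μ ν) {f : β → ℝ}
    (hf : AEStronglyMeasurable f ν) : ∫ x, f (φ x) ∂μ = ∫ y, f y ∂ν := by
  rw [← hφ.map_eq, integral_map hφ.aemeasurable (hφ.map_eq.symm ▸ hf)]

lemma entropy_comp_of_measurePreserving {φ : α → β} (hφ : MeasurePreserving φ μ ν) {f : β → ℝ}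
    (hf : Measurable f) : entropy μ (fun x => f (φ x)) = entropy ν f := by
  simp only [entropy, integral_comp_of_measurePreserving hφ hf.aestronglyMeasurable,
    integral_comp_of_measurePreserving hφ (f := fun y => f y * log (f y))
      (hf.mul hf.log).aestronglyMeasurable]

lemma entropy_nonneg [IsProbabilityMeasure μ] {f : α → ℝ} (hf : Integrable f μ)
    (hflog : Integrable (fun x => f x * log (f x)) μ) (hf0 : ∀ x, 0 ≤ f x) : 0 ≤ entropy μ f :=
  sub_nonneg.2 <| convexOn_mul_log.map_integral_le continuous_mul_log.continuousOn isClosed_Ici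
    (.of_forall hf0) hf hflog

lemma mul_klFun_div {t : ℝ} (ht : t ≠ 0) (y : ℝ) :
    t * klFun (y / t) = y * log y - y * log t + t - y := by
  rcases eq_or_ne y 0 with rfl | hy
  · simp [klFun]
  · rw [klFun, log_div hy ht]
    field_simp

lemma integrable_mul_klFun_div [IsFiniteMeasure μ] {f : α → ℝ} (hf : Integrable f μ)
    (hflog : Integrable (fun x => f x * log (f x)) μ) {t : ℝ} (ht : t ≠ 0) :
    Integrable (fun x => t * klFun (f x / t)) μ := by
  simp only [mul_klFun_div ht]
  fun_prop

lemma integral_mul_klFun_div [IsProbabilityMeasure μ] {f : α → ℝ} (hf : Integrable f μ)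
    (hflog : Integrable (fun x => f x * log (f x)) μ) {t : ℝ} (ht : t ≠ 0) :
    ∫ x, t * klFun (f x / t) ∂μ = entropy μ f + t * klFun ((∫ x, f x ∂μ) / t) := by
  simp only [mul_klFun_div ht]
  rw [integral_sub (by fun_prop) hf, integral_add (by fun_prop) (by fun_prop),
    integral_sub hflog (by fun_prop), integral_mul_const, entropy]
  simp only [integral_const, probReal_univ, one_smul]
  ring

lemma integral_pos_of_forall_pos [NeZero μ] {f : α → ℝ} (hf : Integrable f μ)
    (hpos : ∀ x, 0 < f x) : 0 < ∫ x, f x ∂μ := by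
  rw [integral_pos_iff_support_of_nonneg (fun x => (hpos x).le) hf,
    Function.support_eq_univ fun x => (hpos x).ne', Measure.measure_univ_pos]
  exact NeZero.ne μ

/-- The Holley–Stroock perturbation principle for the entropy. -/
lemma entropy_le_mul_of_measure_le_smul {μ ν : Measure α} [IsProbabilityMeasure μ]
    [IsProbabilityMeasure ν] {c : ℝ≥0} (hνμ : ν ≤ c • μ) {f : α → ℝ} (hf : Integrable f μ)
    (hflog : Integrable (fun x => f x * log (f x)) μ) (hpos : ∀ x, 0 < f x) :
    entropy ν f ≤ c * entropy μ f := by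
  have hm : 0 < ∫ x, f x ∂μ := integral_pos_of_forall_pos hf hpos
  have of_smul {g : α → ℝ} (hg : Integrable g μ) : Integrable g ν :=
    (hg.smul_measure_nnreal (c := c)).mono_measure hνμ
  set m := ∫ x, f x ∂μ
  have klFun_nonneg (x : α) : 0 ≤ m * klFun (f x / m) :=
    mul_nonneg hm.le (InformationTheory.klFun_nonneg (by have := hpos x; positivity))
  calc entropy ν f ≤ ∫ x, m * klFun (f x / m) ∂ν := by
        rw [integral_mul_klFun_div (of_smul hf) (of_smul hflog) hm.ne']
        exact le_add_of_nonneg_right <| mul_nonneg hm.le <| InformationTheory.klFun_nonneg <|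
          div_nonneg (integral_nonneg fun x => (hpos x).le) hm.le
    _ ≤ ∫ x, m * klFun (f x / m) ∂(c • μ) :=
        integral_mono_measure hνμ (.of_forall klFun_nonneg)
          (integrable_mul_klFun_div hf hflog hm.ne').smul_measure_nnreal
    _ = c * entropy μ f := by
        rw [integral_smul_nnreal_measure, integral_mul_klFun_div hf hflog hm.ne', div_self hm.ne',
          klFun_one, mul_zero, add_zero, NNReal.smul_def, smul_eq_mul]

lemma entropy_eq_integral_mul_log_div [NeZero μ] {f : α → ℝ} (hf : Integrable f μ)
    (hflog : Integrable (fun x => f x * log (f x)) μ) (hpos : ∀ x, 0 < f x) :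
    entropy μ f = ∫ x, f x * log (f x / ∫ y, f y ∂μ) ∂μ := by
  simp only [fun x => log_div (hpos x).ne' (integral_pos_of_forall_pos hf hpos).ne', mul_sub]
  rw [integral_sub hflog (hf.mul_const _), integral_mul_const, entropy]

lemma integral_mul_log_le_entropy [IsProbabilityMeasure μ] {f k : α → ℝ} (hf : Integrable f μ)
    (hflog : Integrable (fun x => f x * log (f x)) μ) (hpos : ∀ x, 0 < f x)
    (hk : Integrable k μ) (hk1 : ∫ x, k x ∂μ = 1) (hkpos : ∀ x, 0 < k x)
    (hfk : Integrable (fun x => f x * log (k x)) μ) :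
    ∫ x, f x * log (k x) ∂μ ≤ entropy μ f := by
  set m := ∫ x, f x ∂μ
  have hm : 0 < m := integral_pos_of_forall_pos hf hpos
  have pointwise (x : α) :
      f x * log (k x) ≤ f x * log (f x) - f x * log m + (m * k x - f x) := by
    have h := mul_le_mul_of_nonneg_left
      (log_le_sub_one_of_pos (show 0 < m * k x / f x by
        have := hpos x; have := hkpos x; positivity)) (hpos x).le
    rw [log_div (mul_pos hm (hkpos x)).ne' (hpos x).ne', log_mul hm.ne' (hkpos x).ne',
      mul_sub_one, mul_div_cancel₀ _ (hpos x).ne'] at h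
    linarith
  calc ∫ x, f x * log (k x) ∂μ
      ≤ ∫ x, (f x * log (f x) - f x * log m + (m * k x - f x)) ∂μ :=
        integral_mono hfk (by fun_prop) pointwise
    _ = entropy μ f := by
        rw [integral_add (by fun_prop) (by fun_prop), integral_sub hflog (by fun_prop),
          integral_sub (by fun_prop) hf, integral_mul_const, integral_const_mul, hk1, entropy]
        ring

end Entropy

section EntropyProd

variable {α β : Type*} [MeasurableSpace α] [MeasurableSpace β] {μ : Measure α} {ν : Measure β}
  {c C : ℝ}

lemma integrable_mul_log_self_of_mem_Icc [IsFiniteMeasure μ] {f : α → ℝ} (hf : Measurable f)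
    (hfb : ∀ x, f x ∈ Icc c C) : Integrable (fun x => f x * log (f x)) μ := by
  obtain ⟨D, hD⟩ := isCompact_Icc.exists_bound_of_continuousOn
    (continuous_mul_log.continuousOn (s := Icc c C))
  exact .of_bound (hf.mul hf.log).aestronglyMeasurable D (.of_forall fun x => hD _ (hfb x))

lemma integrable_mul_log_of_mem_Icc {f k : α → ℝ} (hf : Integrable f μ) (hk : Measurable k)
    (hc : 0 < c) (hkb : ∀ x, k x ∈ Icc c C) : Integrable (fun x => f x * log (k x)) μ :=
  hf.mul_bdd hk.log.aestronglyMeasurable <| .of_forall fun x =>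
    abs_le_max_abs_abs (log_le_log hc (hkb x).1) (log_le_log (hc.trans_le (hkb x).1) (hkb x).2)

lemma integral_mem_Icc [IsProbabilityMeasure μ] {f : α → ℝ} (hf : Measurable f)
    (hfb : ∀ x, f x ∈ Icc c C) : ∫ x, f x ∂μ ∈ Icc c C :=
  (convex_Icc c C).integral_mem isClosed_Icc (.of_forall hfb)
    (.of_mem_Icc c C hf.aemeasurable (.of_forall hfb))

lemma integrable_entropy_of_measurable_uncurry [IsProbabilityMeasure μ] [IsFiniteMeasure ν]
    {F : β → α → ℝ} (hF : Measurable (uncurry F)) (hFb : ∀ y x, F y x ∈ Icc c C) :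
    Integrable (fun y => entropy μ (F y)) ν := by
  have marginal_measurable : Measurable fun y => ∫ x, F y x ∂μ :=
    hF.stronglyMeasurable.integral_prod_right.measurable
  have joint_integrable : Integrable (fun p : β × α => F p.1 p.2 * log (F p.1 p.2)) (ν.prod μ) :=
    integrable_mul_log_self_of_mem_Icc hF fun p => hFb p.1 p.2
  exact joint_integrable.integral_prod_left.sub
    (integrable_mul_log_self_of_mem_Icc marginal_measurable fun y =>
      integral_mem_Icc (hF.comp measurable_prodMk_left) (hFb y))

variable [IsProbabilityMeasure μ] [IsProbabilityMeasure ν] {f : α × β → ℝ}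

lemma entropy_prod (hf : Measurable f) (hfb : ∀ p, f p ∈ Icc c C) :
    entropy (μ.prod ν) f =
      ∫ y, entropy μ (fun x => f (x, y)) ∂ν + entropy ν (fun y => ∫ x, f (x, y) ∂μ) := by
  have hflog : Integrable (fun p => f p * log (f p)) (μ.prod ν) :=
    integrable_mul_log_self_of_mem_Icc hf hfb
  have marginal_measurable : Measurable fun y => ∫ x, f (x, y) ∂μ :=
    hf.stronglyMeasurable.integral_prod_left'.measurable
  have marginal_mul_log_integrable := integrable_mul_log_self_of_mem_Icc (μ := ν)
    marginal_measurable fun y =>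
      integral_mem_Icc (hf.comp measurable_prodMk_right) fun x => hfb (x, y)
  simp only [entropy]
  rw [integral_sub hflog.integral_prod_right marginal_mul_log_integrable,
    integral_prod_symm _ hflog,
    integral_prod_symm f (.of_mem_Icc c C hf.aemeasurable (.of_forall hfb))]
  ring

/-- Convexity of the entropy, in the form of Jensen's inequality. -/
lemma entropy_integral_le (hc : 0 < c) (hf : Measurable f) (hfb : ∀ p, f p ∈ Icc c C) :
    entropy ν (fun y => ∫ x, f (x, y) ∂μ) ≤ ∫ x, entropy ν (fun y => f (x, y)) ∂μ := by
  set g : β → ℝ := fun y => ∫ x, f (x, y) ∂μ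
  set m := ∫ y, g y ∂ν
  have g_measurable : Measurable g := hf.stronglyMeasurable.integral_prod_left'.measurable
  have g_mem (y : β) : g y ∈ Icc c C :=
    integral_mem_Icc (hf.comp measurable_prodMk_right) fun x => hfb (x, y)
  have g_integrable : Integrable g ν := .of_mem_Icc c C g_measurable.aemeasurable (.of_forall g_mem)
  have hm : 0 < m := hc.trans_le (integral_mem_Icc g_measurable g_mem).1
  have f_integrable : Integrable f (μ.prod ν) := .of_mem_Icc c C hf.aemeasurable (.of_forall hfb)
  have g_div_mem (y : β) : g y / m ∈ Icc (c / m) (C / m) :=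
    ⟨by gcongr; exact (g_mem y).1, by gcongr; exact (g_mem y).2⟩
  have g_div_measurable : Measurable fun y => g y / m := g_measurable.div_const m
  have g_div_pos (y : β) : 0 < g y / m := (div_pos hc hm).trans_le (g_div_mem y).1
  have f_mul_log_integrable : Integrable (fun p : α × β => f p * log (g p.2 / m)) (μ.prod ν) :=
    integrable_mul_log_of_mem_Icc f_integrable (g_div_measurable.comp measurable_snd)
      (div_pos hc hm) fun p => g_div_mem p.2
  calc entropy ν g = ∫ y, g y * log (g y / m) ∂ν :=
        entropy_eq_integral_mul_log_div g_integrable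
          (integrable_mul_log_self_of_mem_Icc g_measurable g_mem)
          fun y => hc.trans_le (g_mem y).1
    _ = ∫ x, ∫ y, f (x, y) * log (g y / m) ∂ν ∂μ := by
        rw [integral_integral_swap f_mul_log_integrable]
        simp only [integral_mul_const, g]
    _ ≤ ∫ x, entropy ν (fun y => f (x, y)) ∂μ := by
        refine integral_mono f_mul_log_integrable.integral_prod_left
          (integrable_entropy_of_measurable_uncurry hf fun x y => hfb (x, y)) fun x => ?_
        have slice_measurable : Measurable fun y => f (x, y) := hf.comp measurable_prodMk_left
        have slice_integrable : Integrable (fun y => f (x, y)) ν :=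
          .of_mem_Icc c C slice_measurable.aemeasurable (.of_forall fun y => hfb (x, y))
        refine integral_mul_log_le_entropy slice_integrable
          (integrable_mul_log_self_of_mem_Icc slice_measurable fun y => hfb (x, y))
          (fun y => hc.trans_le (hfb (x, y)).1) (g_integrable.div_const m) ?_ g_div_pos
          (integrable_mul_log_of_mem_Icc slice_integrable g_div_measurable (div_pos hc hm)
            g_div_mem)
        rw [integral_div, div_self hm.ne']

lemma entropy_prod_le (hc : 0 < c) (hf : Measurable f) (hfb : ∀ p, f p ∈ Icc c C) :
    entropy (μ.prod ν) f ≤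
      ∫ y, entropy μ (fun x => f (x, y)) ∂ν + ∫ x, entropy ν (fun y => f (x, y)) ∂μ := by
  rw [entropy_prod hf hfb]
  gcongr
  exact entropy_integral_le hc hf hfb

end EntropyProd

section Tensorization

lemma measurePreserving_update {ι : Type*} [Fintype ι] [DecidableEq ι] {α : ι → Type*}
    [∀ i, MeasurableSpace (α i)] (μ : ∀ i, Measure (α i)) [∀ i, IsProbabilityMeasure (μ i)]
    (i : ι) : MeasurePreserving (fun p : (∀ j, α j) × α i => update p.1 i p.2)
      ((Measure.pi μ).prod (μ i)) (Measure.pi μ) := by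
  refine ⟨measurable_update', (Measure.pi_eq fun s hs => ?_).symm⟩
  have preimage_eq : (fun p : (∀ j, α j) × α i => update p.1 i p.2) ⁻¹' univ.pi s =
      univ.pi (update s i univ) ×ˢ s i := by
    ext ⟨x, t⟩
    simp only [mem_preimage, Set.mem_pi, mem_univ, true_imp_iff, mem_prod]
    rw [forall_update_iff x fun j a => a ∈ s j, forall_update_iff s fun j u => x j ∈ u]
    simp [and_comm]
  rw [Measure.map_apply measurable_update' (.univ_pi hs), preimage_eq, Measure.prod_prod,
    Measure.pi_pi, ← Finset.prod_erase_mul _ _ (Finset.mem_univ i),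
    ← Finset.prod_erase_mul _ _ (Finset.mem_univ i)]
  simp only [update_self, measure_univ, mul_one]
  congr 1
  exact Finset.prod_congr rfl fun j hj => by rw [update_of_ne (Finset.ne_of_mem_erase hj)]

lemma integral_integral_update {ι : Type*} [Fintype ι] [DecidableEq ι] {α : ι → Type*}
    [∀ i, MeasurableSpace (α i)] (μ : ∀ i, Measure (α i)) [∀ i, IsProbabilityMeasure (μ i)]
    (i : ι) {h : (∀ j, α j) → ℝ} (hh : Integrable h (Measure.pi μ)) :
    ∫ x, ∫ t, h (update x i t) ∂μ i ∂Measure.pi μ = ∫ x, h x ∂Measure.pi μ := by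
  have hp := measurePreserving_update μ i
  rw [integral_integral (f := fun x t => h (update x i t)) (hp.integrable_comp_of_integrable hh),
    integral_comp_of_measurePreserving hp hh.aestronglyMeasurable]

lemma measurePreserving_finCons {n : ℕ} {α : Fin (n + 1) → Type*} [∀ i, MeasurableSpace (α i)]
    (μ : ∀ i, Measure (α i)) [∀ i, SigmaFinite (μ i)] :
    MeasurePreserving (fun p : α 0 × (∀ i : Fin n, α i.succ) => (Fin.cons p.1 p.2 : ∀ i, α i))
      ((μ 0).prod (Measure.pi fun i => μ i.succ)) (Measure.pi μ) := by
  have cons_eq : (fun p : α 0 × (∀ i : Fin n, α i.succ) => (Fin.cons p.1 p.2 : ∀ i, α i)) =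
      (MeasurableEquiv.piFinSuccAbove α 0).symm := by
    funext p i
    cases i using Fin.cases <;> rfl
  rw [cons_eq]
  exact (measurePreserving_piFinSuccAbove μ 0).symm

/-- Tensorization of the entropy. -/
theorem entropy_pi_le {n : ℕ} {α : Fin n → Type*} [∀ i, MeasurableSpace (α i)]
    (μ : ∀ i, Measure (α i)) [∀ i, IsProbabilityMeasure (μ i)] {c C : ℝ} (hc : 0 < c)
    {f : (∀ i, α i) → ℝ} (hf : Measurable f) (hfb : ∀ x, f x ∈ Icc c C) :
    entropy (Measure.pi μ) f ≤
      ∑ i, ∫ x, entropy (μ i) (fun t => f (update x i t)) ∂Measure.pi μ := by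
  induction n with
  | zero =>
    simp [entropy, integral_unique]
  | succ n ih =>
    have hcons := measurePreserving_finCons μ
    have slice_integrable (i : Fin (n + 1)) :
        Integrable (fun x => entropy (μ i) fun t => f (update x i t)) (Measure.pi μ) :=
      integrable_entropy_of_measurable_uncurry (F := fun x t => f (update x i t))
        (hf.comp measurable_update') fun x t => hfb _
    have slice_cons_integrable (i : Fin (n + 1)) :
        Integrable (fun p : α 0 × (∀ i : Fin n, α i.succ) =>
          entropy (μ i) fun t => f (update (Fin.cons p.1 p.2) i t))
          ((μ 0).prod (Measure.pi fun i => μ i.succ)) :=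
      hcons.integrable_comp_of_integrable (slice_integrable i)
    have integral_slice (i : Fin (n + 1)) := integral_comp_of_measurePreserving hcons
      (slice_integrable i).aestronglyMeasurable
    have cons_measurable (t : α 0) :
        Measurable fun x : ∀ i : Fin n, α i.succ => (Fin.cons t x : ∀ i, α i) :=
      hcons.measurable.comp measurable_prodMk_left
    simp only [Fin.sum_univ_succ, ← integral_slice, integral_prod _ (slice_cons_integrable _)]
    rw [← entropy_comp_of_measurePreserving hcons hf]
    refine (entropy_prod_le hc (hf.comp hcons.measurable) fun p => hfb _).trans (add_le_add ?_ ?_)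
    · simp [Fin.update_cons_zero]
    · rw [← integral_finsetSum _ fun i _ => (slice_cons_integrable i.succ).integral_prod_left]
      refine integral_mono (integrable_entropy_of_measurable_uncurry
        (hf.comp hcons.measurable) fun _ _ => hfb _)
        (integrable_finsetSum _ fun i _ => (slice_cons_integrable i.succ).integral_prod_left)
        fun t => ?_
      simpa only [Fin.cons_update, comp_def] using
        ih (fun i => μ i.succ) (hf.comp (cons_measurable t)) fun x => hfb _

end Tensorization

section Wirtinger

variable {a b : ℝ}

lemma memLp_restrict_Ioc_of_continuousOn {E : Type*} [NormedAddCommGroup E] {w : ℝ → E}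
    (hw : ContinuousOn w (Icc a b)) (p : ℝ≥0∞) : MemLp w p (volume.restrict (Ioc a b)) := by
  obtain ⟨C, hC⟩ := isCompact_Icc.exists_bound_of_continuousOn hw
  exact .of_bound ((hw.mono Ioc_subset_Icc_self).aestronglyMeasurable measurableSet_Ioc) C <|
    (ae_restrict_iff' measurableSet_Ioc).2 <| .of_forall fun x hx => hC x (Ioc_subset_Icc_self hx)

lemma sq_mul_norm_sq_fourierCoeffOn_le (hab : a < b) {w w' : ℝ → ℂ}
    (hwc : ContinuousOn w (Icc a b)) (hw : ∀ x ∈ Ioo a b, HasDerivAt w (w' x) x)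
    (hw' : IntervalIntegrable w' volume a b) (hwab : w a = w b)
    (hmean : ∫ x in a..b, w x = 0) (n : ℤ) :
    (2 * π / (b - a)) ^ 2 * ‖fourierCoeffOn hab w n‖ ^ 2 ≤ ‖fourierCoeffOn hab w' n‖ ^ 2 := by
  rcases eq_or_ne n 0 with rfl | hn
  · have coeff_zero : fourierCoeffOn hab w 0 = 0 := by simp [fourierCoeffOn_eq_integral, hmean]
    rw [coeff_zero]
    simp
  · have hba : 0 < b - a := sub_pos.2 hab
    have coeff_eq : |(n : ℝ)| * (2 * π / (b - a)) * ‖fourierCoeffOn hab w n‖ =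
        ‖fourierCoeffOn hab w' n‖ := by
      rw [fourierCoeffOn_of_hasDerivAt_Ioo hab hn (uIcc_of_le hab.le ▸ hwc)
        (by simpa [hab.le] using hw) hw', hwab]
      simp only [sub_self, mul_zero, zero_sub, norm_mul, norm_div, norm_neg, norm_one,
        Complex.norm_ofNat, Complex.norm_I, Complex.norm_real, Complex.norm_intCast,
        ← Complex.ofReal_sub, norm_of_nonneg hba.le, norm_of_nonneg pi_pos.le]
      field_simp
    have one_le : (1 : ℝ) ≤ |(n : ℝ)| := mod_cast Int.one_le_abs hn
    rw [← mul_pow, ← coeff_eq]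
    gcongr
    exact le_mul_of_one_le_left (by positivity) one_le

/-- Wirtinger's inequality. -/
theorem sq_mul_integral_norm_sq_le_of_hasDerivAt (hab : a < b) {w w' : ℝ → ℂ}
    (hwc : ContinuousOn w (Icc a b)) (hw : ∀ x ∈ Ioo a b, HasDerivAt w (w' x) x)
    (hw' : MemLp w' 2 (volume.restrict (Ioc a b))) (hwab : w a = w b)
    (hmean : ∫ x in a..b, w x = 0) :
    (2 * π / (b - a)) ^ 2 * ∫ x in a..b, ‖w x‖ ^ 2 ≤ ∫ x in a..b, ‖w' x‖ ^ 2 := by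
  have w'_integrable : IntervalIntegrable w' volume a b :=
    (intervalIntegrable_iff_integrableOn_Ioc_of_le hab.le).2 (hw'.integrable (by norm_num))
  have parseval := (hasSum_sq_fourierCoeffOn hab
    (memLp_restrict_Ioc_of_continuousOn hwc 2)).mul_left ((2 * π / (b - a)) ^ 2)
  have le := hasSum_le (sq_mul_norm_sq_fourierCoeffOn_le hab hwc hw w'_integrable hwab hmean)
    parseval (hasSum_sq_fourierCoeffOn hab hw')
  rw [smul_eq_mul, smul_eq_mul, mul_left_comm] at le
  exact le_of_mul_le_mul_left le (inv_pos.2 (sub_pos.2 hab))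

theorem sq_mul_integral_sq_le_of_hasDerivAt (hab : a < b) {w w' : ℝ → ℝ}
    (hwc : ContinuousOn w (Icc a b)) (hw : ∀ x ∈ Ioo a b, HasDerivAt w (w' x) x)
    (hw' : MemLp w' 2 (volume.restrict (Ioc a b))) (hwab : w a = w b)
    (hmean : ∫ x in a..b, w x = 0) :
    (2 * π / (b - a)) ^ 2 * ∫ x in a..b, w x ^ 2 ≤ ∫ x in a..b, w' x ^ 2 := by
  simpa using sq_mul_integral_norm_sq_le_of_hasDerivAt hab (w := fun x => (w x : ℂ))
    (Complex.continuous_ofReal.comp_continuousOn hwc) (fun x hx => (hw x hx).ofReal_comp)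
    hw'.ofReal (by rw [hwab]) (by rw [intervalIntegral.integral_ofReal, hmean, Complex.ofReal_zero])

end Wirtinger

section FisherInformation

variable {a b : ℝ} {u u₁ u₂ u₃ : ℝ → ℝ}

lemma integral_mul_log_add_one_eq_neg (hu : ∀ x, HasDerivAt u (u₁ x) x)
    (hu₁ : ∀ x, HasDerivAt u₁ (u₂ x) x) (hu₂ : Continuous u₂) (hpos : ∀ x, 0 < u x)
    (huab : u a = u b) (huab₁ : u₁ a = u₁ b) :
    ∫ x in a..b, u₂ x * (log (u x) + 1) = -∫ x in a..b, u₁ x ^ 2 / u x := by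
  have u_cont : Continuous u := continuous_iff_continuousAt.2 fun x => (hu x).continuousAt
  have u₁_cont : Continuous u₁ := continuous_iff_continuousAt.2 fun x => (hu₁ x).continuousAt
  have hne (x : ℝ) : u x ≠ 0 := (hpos x).ne'
  have by_parts := intervalIntegral.integral_mul_deriv_eq_deriv_mul (a := a) (b := b)
    (fun x _ => ((hu x).log (hne x)).add_const 1) (fun x _ => hu₁ x)
    (Continuous.intervalIntegrable (by fun_prop (disch := exact hne)) _ _)
    (hu₂.intervalIntegrable _ _)
  rw [huab, huab₁, sub_self, zero_sub] at by_parts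
  calc ∫ x in a..b, u₂ x * (log (u x) + 1) = ∫ x in a..b, (log (u x) + 1) * u₂ x := by
        simp only [mul_comm]
    _ = -∫ x in a..b, u₁ x / u x * u₁ x := by_parts
    _ = -∫ x in a..b, u₁ x ^ 2 / u x := by
        congr 1
        exact intervalIntegral.integral_congr fun x _ => by ring

lemma hasDerivAt_div_two_mul_sqrt {x : ℝ} (hu : HasDerivAt u (u₁ x) x)
    (hu₁ : HasDerivAt u₁ (u₂ x) x) (hpos : 0 < u x) :
    HasDerivAt (fun y => u₁ y / (2 * √(u y)))
      ((2 * u x * u₂ x - u₁ x ^ 2) / (4 * u x * √(u x))) x := by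
  have : 0 < √(u x) := Real.sqrt_pos.2 hpos
  refine (hu₁.div ((hu.sqrt hpos.ne').const_mul 2) (by positivity)).congr_deriv ?_
  field_simp
  simp only [sq_sqrt hpos.le]
  ring

/-- Wirtinger's inequality for the derivative of `√u`. -/
lemma sq_mul_integral_sq_div_le (hab : a < b) (hu : ∀ x, HasDerivAt u (u₁ x) x)
    (hu₁ : ∀ x, HasDerivAt u₁ (u₂ x) x) (hu₂ : Continuous u₂) (hpos : ∀ x, 0 < u x)
    (huab : u a = u b) (huab₁ : u₁ a = u₁ b) :
    4 * (2 * π / (b - a)) ^ 2 * ∫ x in a..b, u₁ x ^ 2 / u x ≤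
      ∫ x in a..b, (2 * u x * u₂ x - u₁ x ^ 2) ^ 2 / u x ^ 3 := by
  have u_cont : Continuous u := continuous_iff_continuousAt.2 fun x => (hu x).continuousAt
  have u₁_cont : Continuous u₁ := continuous_iff_continuousAt.2 fun x => (hu₁ x).continuousAt
  let w (x : ℝ) : ℝ := u₁ x / (2 * √(u x))
  let w' (x : ℝ) : ℝ := (2 * u x * u₂ x - u₁ x ^ 2) / (4 * u x * √(u x))
  have hw (x : ℝ) : HasDerivAt w (w' x) x := hasDerivAt_div_two_mul_sqrt (hu x) (hu₁ x) (hpos x)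
  have w_cont : Continuous w := continuous_iff_continuousAt.2 fun x => (hw x).continuousAt
  have w'_cont : Continuous w' := by
    refine Continuous.div (by fun_prop) (by fun_prop) fun x => ?_
    have := hpos x
    positivity
  have w_mean : ∫ x in a..b, w x = 0 := by
    rw [intervalIntegral.integral_eq_sub_of_hasDerivAt
      (fun x _ => (hu x).sqrt (hpos x).ne') (w_cont.intervalIntegrable _ _), huab, sub_self]
  have wirtinger := sq_mul_integral_sq_le_of_hasDerivAt hab w_cont.continuousOn (fun x _ => hw x)
    (memLp_restrict_Ioc_of_continuousOn w'_cont.continuousOn 2)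
    (by simp only [w, huab, huab₁]) w_mean
  have sq_w (x : ℝ) : w x ^ 2 = 1 / 4 * (u₁ x ^ 2 / u x) := by
    rw [div_pow, mul_pow, sq_sqrt (hpos x).le]
    ring
  have sq_w' (x : ℝ) : w' x ^ 2 = 1 / 16 * ((2 * u x * u₂ x - u₁ x ^ 2) ^ 2 / u x ^ 3) := by
    rw [div_pow, mul_pow, mul_pow, sq_sqrt (hpos x).le]
    ring
  simp only [sq_w, sq_w', intervalIntegral.integral_const_mul] at wirtinger
  linarith

/-- The integrand on the left is that of the time derivative of the Fisher information `∫ u'² / u`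
along the heat equation `∂ₜ u = ∂ₓ² u`. -/
lemma integral_le_neg_half_mul_integral (hab : a ≤ b) (hu : ∀ x, HasDerivAt u (u₁ x) x)
    (hu₁ : ∀ x, HasDerivAt u₁ (u₂ x) x) (hu₂ : ∀ x, HasDerivAt u₂ (u₃ x) x) (hu₃ : Continuous u₃)
    (hpos : ∀ x, 0 < u x) (huab : u a = u b) (huab₁ : u₁ a = u₁ b) (huab₂ : u₂ a = u₂ b) :
    ∫ x in a..b, (2 * u₁ x * u₃ x / u x - u₁ x ^ 2 * u₂ x / u x ^ 2) ≤
      -(1 / 2) * ∫ x in a..b, (2 * u x * u₂ x - u₁ x ^ 2) ^ 2 / u x ^ 3 := by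
  have u_cont : Continuous u := continuous_iff_continuousAt.2 fun x => (hu x).continuousAt
  have u₁_cont : Continuous u₁ := continuous_iff_continuousAt.2 fun x => (hu₁ x).continuousAt
  have u₂_cont : Continuous u₂ := continuous_iff_continuousAt.2 fun x => (hu₂ x).continuousAt
  have hne (x : ℝ) : u x ≠ 0 := (hpos x).ne'
  have pow_ne (k : ℕ) (x : ℝ) : u x ^ k ≠ 0 := pow_ne_zero k (hne x)
  -- The boundary term that arises from integrating by parts so as to complete the square.
  let B (x : ℝ) : ℝ := 2 * u₁ x * u₂ x / u x - u₁ x ^ 3 / (3 * u x ^ 2)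
  let B' (x : ℝ) : ℝ := 2 * u₁ x * u₃ x / u x - u₁ x ^ 2 * u₂ x / u x ^ 2 +
    (1 / 2 * ((2 * u x * u₂ x - u₁ x ^ 2) ^ 2 / u x ^ 3) + u₁ x ^ 4 / u x ^ 3 / 6)
  have hB (x : ℝ) : HasDerivAt B (B' x) x := by
    refine ((((hu₁ x).const_mul 2).mul (hu₂ x)).div (hu x) (hne x)).sub
      (((hu₁ x).pow 3).div (((hu x).pow 2).const_mul 3) (mul_ne_zero three_ne_zero (pow_ne 2 x)))
      |>.congr_deriv ?_
    have := hne x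
    simp only [B', Pi.mul_apply, Pi.pow_apply]
    field_simp
    ring
  have first_cont : Continuous fun x => 2 * u₁ x * u₃ x / u x - u₁ x ^ 2 * u₂ x / u x ^ 2 := by
    fun_prop (disch := first | exact hne | exact pow_ne 2)
  have second_cont : Continuous fun x => (2 * u x * u₂ x - u₁ x ^ 2) ^ 2 / u x ^ 3 := by
    fun_prop (disch := exact pow_ne 3)
  have third_cont : Continuous fun x => u₁ x ^ 4 / u x ^ 3 / 6 := by
    fun_prop (disch := exact pow_ne 3)
  have integral_B' : ∫ x in a..b, B' x = 0 := by
    rw [intervalIntegral.integral_eq_sub_of_hasDerivAt (fun x _ => hB x)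
      (Continuous.intervalIntegrable (by fun_prop) _ _)]
    simp only [B, huab, huab₁, huab₂, sub_self]
  have third_nonneg : 0 ≤ ∫ x in a..b, u₁ x ^ 4 / u x ^ 3 / 6 :=
    intervalIntegral.integral_nonneg hab fun x _ => by have := hpos x; positivity
  rw [intervalIntegral.integral_add (first_cont.intervalIntegrable _ _)
      (Continuous.intervalIntegrable (by fun_prop) _ _),
    intervalIntegral.integral_add (Continuous.intervalIntegrable (by fun_prop) _ _)
      (third_cont.intervalIntegrable _ _), intervalIntegral.integral_const_mul] at integral_B'
  linarith

lemma integral_le_neg_mul_integral_sq_div (hab : a < b) (hu : ∀ x, HasDerivAt u (u₁ x) x)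
    (hu₁ : ∀ x, HasDerivAt u₁ (u₂ x) x) (hu₂ : ∀ x, HasDerivAt u₂ (u₃ x) x) (hu₃ : Continuous u₃)
    (hpos : ∀ x, 0 < u x) (huab : u a = u b) (huab₁ : u₁ a = u₁ b) (huab₂ : u₂ a = u₂ b) :
    ∫ x in a..b, (2 * u₁ x * u₃ x / u x - u₁ x ^ 2 * u₂ x / u x ^ 2) ≤
      -(2 * (2 * π / (b - a)) ^ 2) * ∫ x in a..b, u₁ x ^ 2 / u x := by
  have u₂_cont : Continuous u₂ := continuous_iff_continuousAt.2 fun x => (hu₂ x).continuousAt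
  linarith [sq_mul_integral_sq_div_le hab hu hu₁ u₂_cont hpos huab huab₁,
    integral_le_neg_half_mul_integral hab.le hu hu₁ hu₂ hu₃ hpos huab huab₁ huab₂]

end FisherInformation

section Gaussian

lemma hasDerivAt_gaussianPDFReal (m : ℝ) (v : ℝ≥0) (x : ℝ) :
    HasDerivAt (gaussianPDFReal m v) (-((x - m) / v) * gaussianPDFReal m v x) x := by
  have h := ((((hasDerivAt_id x).sub_const m).pow 2).neg.div_const (2 * (v : ℝ))).exp.const_mul
    (√(2 * π * v))⁻¹
  refine h.congr_deriv ?_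
  simp only [gaussianPDFReal, id, Pi.pow_apply, Pi.neg_apply]
  ring

lemma integrable_gaussianReal_iff {m : ℝ} {v : ℝ≥0} (hv : v ≠ 0) {g : ℝ → ℝ} :
    Integrable g (gaussianReal m v) ↔ Integrable fun x => g x * gaussianPDFReal m v x := by
  simp only [gaussianReal_of_var_ne_zero _ hv, ← toReal_gaussianPDF,
    integrable_withDensity_iff (measurable_gaussianPDF m v)
      (.of_forall fun _ => gaussianPDF_lt_top)]

/-- Stein's lemma. -/
theorem integral_sub_mul_gaussianReal {m : ℝ} {v : ℝ≥0} {h h' : ℝ → ℝ}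
    (hh : ∀ x, HasDerivAt h (h' x) x) (h_int : Integrable h (gaussianReal m v))
    (h'_int : Integrable h' (gaussianReal m v))
    (sub_mul_int : Integrable (fun x => (x - m) * h x) (gaussianReal m v)) :
    ∫ x, (x - m) * h x ∂gaussianReal m v = v * ∫ x, h' x ∂gaussianReal m v := by
  rcases eq_or_ne v 0 with rfl | hv
  · simp
  have hv' : (v : ℝ) ≠ 0 := mod_cast hv
  rw [integrable_gaussianReal_iff hv] at h_int h'_int sub_mul_int
  have by_parts := integral_mul_deriv_eq_deriv_mul_of_integrable (fun x _ => hh x)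
    (fun x _ => hasDerivAt_gaussianPDFReal m v x)
    ((sub_mul_int.const_mul (-(v : ℝ)⁻¹)).congr (.of_forall fun x => by
      simp only [Pi.mul_apply]; ring)) h'_int h_int
  rw [integral_gaussianReal_eq_integral_smul hv, integral_gaussianReal_eq_integral_smul hv,
    ← integral_const_mul]
  calc ∫ x, gaussianPDFReal m v x • ((x - m) * h x)
      = -v * ∫ x, h x * (-((x - m) / v) * gaussianPDFReal m v x) := by
        rw [← integral_const_mul]
        congr 1 with x
        simp only [smul_eq_mul]
        field_simp
    _ = ∫ x, v * gaussianPDFReal m v x • h' x := by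
        rw [by_parts, neg_mul_neg, ← integral_const_mul]
        congr 1 with x
        simp only [smul_eq_mul]
        ring

end Gaussian

section HeatFlow

/-- The heat semigroup on the line, given by convolution with centred Gaussians. It is parametrised
by the standard deviation `s`, i.e. it is taken at time `s² / 2`, so that it is differentiable in
the parameter up to and including `s = 0`. -/
def heatFlow (g : ℝ → ℝ) (s x : ℝ) : ℝ := ∫ z, g (x + s * z) ∂gaussianReal 0 1

variable {g g' g'' : ℝ → ℝ} {T : ℝ}

lemma heatFlow_zero (g : ℝ → ℝ) (x : ℝ) : heatFlow g 0 x = g x := by simp [heatFlow]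

lemma integrable_of_continuous_of_bounded {α : Type*} [TopologicalSpace α] [MeasurableSpace α]
    [OpensMeasurableSpace α] {μ : Measure α} [IsFiniteMeasure μ] {g : α → ℝ} (hg : Continuous g)
    (hgb : ∃ C, ∀ x, ‖g x‖ ≤ C) : Integrable g μ :=
  let ⟨C, hC⟩ := hgb
  .of_bound hg.aestronglyMeasurable C (.of_forall hC)

lemma integrable_id_gaussianReal (m : ℝ) (v : ℝ≥0) : Integrable (fun z => z) (gaussianReal m v) :=
  (memLp_id_gaussianReal 1).integrable le_rfl

lemma heatFlow_pos (hg : Continuous g) (hgb : ∃ C, ∀ x, ‖g x‖ ≤ C) (hpos : ∀ x, 0 < g x)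
    (s x : ℝ) : 0 < heatFlow g s x :=
  integral_pos_of_forall_pos (integrable_of_continuous_of_bounded (by fun_prop)
    (hgb.imp fun _ hC z => hC (x + s * z))) fun _ => hpos _

lemma continuous_heatFlow (hg : Continuous g) (hgb : ∃ C, ∀ x, ‖g x‖ ≤ C) :
    Continuous fun p : ℝ × ℝ => heatFlow g p.1 p.2 := by
  obtain ⟨C, hC⟩ := hgb
  exact continuous_of_dominated (bound := fun _ => C)
    (fun p => Continuous.aestronglyMeasurable (by fun_prop)) (fun p => .of_forall fun z => hC _)
    (integrable_const _) (.of_forall fun z => by fun_prop)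

lemma hasDerivAt_heatFlow (hg : ∀ x, HasDerivAt g (g' x) x) (hg' : Continuous g')
    (hgb : ∃ C, ∀ x, ‖g x‖ ≤ C) (hgb' : ∃ C, ∀ x, ‖g' x‖ ≤ C) (s x : ℝ) :
    HasDerivAt (heatFlow g s) (heatFlow g' s x) x := by
  obtain ⟨C', hC'⟩ := hgb'
  have g_cont : Continuous g := continuous_iff_continuousAt.2 fun x => (hg x).continuousAt
  exact (hasDerivAt_integral_of_dominated_loc_of_deriv_le (F := fun y z => g (y + s * z))
    (F' := fun y z => g' (y + s * z)) (bound := fun _ => C') univ_mem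
    (.of_forall fun y => Continuous.aestronglyMeasurable (by fun_prop))
    (integrable_of_continuous_of_bounded (by fun_prop) (hgb.imp fun _ hC z => hC (x + s * z)))
    (Continuous.aestronglyMeasurable (by fun_prop)) (.of_forall fun z y _ => hC' _)
    (integrable_const _) (.of_forall fun z y _ => (hg (y + s * z)).comp_add_const y (s * z))).2

lemma integral_mul_eq_mul_heatFlow (hg : ∀ x, HasDerivAt g (g' x) x) (hg' : Continuous g')
    (hgb : ∃ C, ∀ x, ‖g x‖ ≤ C) (hgb' : ∃ C, ∀ x, ‖g' x‖ ≤ C) (s x : ℝ) :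
    ∫ z, z * g (x + s * z) ∂gaussianReal 0 1 = s * heatFlow g' s x := by
  have g_cont : Continuous g := continuous_iff_continuousAt.2 fun x => (hg x).continuousAt
  have g_line_integrable : Integrable (fun z => g (x + s * z)) (gaussianReal 0 1) :=
    integrable_of_continuous_of_bounded (by fun_prop) (hgb.imp fun _ hC z => hC (x + s * z))
  have g'_line_integrable : Integrable (fun z => g' (x + s * z)) (gaussianReal 0 1) :=
    integrable_of_continuous_of_bounded (by fun_prop) (hgb'.imp fun _ hC z => hC (x + s * z))
  obtain ⟨C, hC⟩ := hgb
  have mul_integrable : Integrable (fun z => z * g (x + s * z)) (gaussianReal 0 1) :=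
    (integrable_id_gaussianReal 0 1).mul_bdd g_line_integrable.1 (.of_forall fun z => hC _)
  have stein := integral_sub_mul_gaussianReal (m := 0) (v := 1)
    (h := fun z => g (x + s * z)) (h' := fun z => s * g' (x + s * z))
    (fun z => ((hg (x + s * z)).comp z (((hasDerivAt_id z).const_mul s).const_add x)).congr_deriv
      (by simp [mul_comm]))
    g_line_integrable (g'_line_integrable.const_mul s)
    (by simpa using mul_integrable)
  simpa [heatFlow, integral_const_mul] using stein

lemma hasDerivAt_heatFlow_scale (hg : ∀ x, HasDerivAt g (g' x) x)
    (hg' : ∀ x, HasDerivAt g' (g'' x) x) (hg'' : Continuous g'') (hgb : ∃ C, ∀ x, ‖g x‖ ≤ C)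
    (hgb' : ∃ C, ∀ x, ‖g' x‖ ≤ C) (hgb'' : ∃ C, ∀ x, ‖g'' x‖ ≤ C) (s x : ℝ) :
    HasDerivAt (fun r => heatFlow g r x) (s * heatFlow g'' s x) s := by
  rw [← integral_mul_eq_mul_heatFlow hg' hg'' hgb' hgb'']
  have g_cont : Continuous g := continuous_iff_continuousAt.2 fun x => (hg x).continuousAt
  have g'_cont : Continuous g' := continuous_iff_continuousAt.2 fun x => (hg' x).continuousAt
  obtain ⟨C', hC'⟩ := hgb'
  refine (hasDerivAt_integral_of_dominated_loc_of_deriv_le (F := fun r z => g (x + r * z))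
    (F' := fun r z => z * g' (x + r * z)) (bound := fun z => ‖z‖ * C') univ_mem
    (.of_forall fun r => Continuous.aestronglyMeasurable (by fun_prop))
    (integrable_of_continuous_of_bounded (by fun_prop) (hgb.imp fun _ hC z => hC (x + s * z)))
    (Continuous.aestronglyMeasurable (by fun_prop)) (.of_forall fun z r _ => ?_)
    ((integrable_id_gaussianReal 0 1).norm.mul_const C') (.of_forall fun z r _ => ?_)).2
  · rw [norm_mul]
    gcongr
    exact hC' _
  · exact ((hg (x + r * z)).comp r (((hasDerivAt_id r).mul_const z).const_add x)).congr_deriv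
      (by simp [mul_comm])

lemma exists_abs_mul_heatFlow_le (hg : ∀ x, HasDerivAt g (g' x) x) (hg' : Continuous g')
    (hgb : ∃ C, ∀ x, ‖g x‖ ≤ C) (hgb' : ∃ C, ∀ x, ‖g' x‖ ≤ C) :
    ∃ K, ∀ s x, |s * heatFlow g' s x| ≤ K := by
  obtain ⟨C, hC⟩ := hgb
  refine ⟨∫ z, ‖z‖ * C ∂gaussianReal 0 1, fun s x => ?_⟩
  rw [← integral_mul_eq_mul_heatFlow hg hg' ⟨C, hC⟩ hgb', ← Real.norm_eq_abs]
  refine norm_integral_le_of_norm_le ((integrable_id_gaussianReal 0 1).norm.mul_const C)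
    (.of_forall fun z => ?_)
  rw [norm_mul]
  gcongr
  exact hC _

lemma periodic_heatFlow (hg : Periodic g T) (s : ℝ) : Periodic (heatFlow g s) T := fun x => by
  simp only [heatFlow, add_right_comm x T, hg _]

lemma integral_heatFlow_of_periodic (hg : Continuous g) (hgb : ∃ C, ∀ x, ‖g x‖ ≤ C)
    (hper : Periodic g T) (s a : ℝ) :
    ∫ x in a..a + T, heatFlow g s x = ∫ x in a..a + T, g x := by
  have translate (z : ℝ) : ∫ x in a..a + T, g (x + s * z) = ∫ x in a..a + T, g x := by
    rw [intervalIntegral.integral_comp_add_right, add_right_comm]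
    exact hper.intervalIntegral_add_eq _ _
  have : IsFiniteMeasure (volume.restrict (uIoc a (a + T))) :=
    inferInstanceAs (IsFiniteMeasure (volume.restrict (Ioc _ _)))
  have uncurry_integrable : Integrable (uncurry fun x z => g (x + s * z))
      ((volume.restrict (uIoc a (a + T))).prod (gaussianReal 0 1)) :=
    integrable_of_continuous_of_bounded (by fun_prop) (hgb.imp fun _ hC p => hC (p.1 + s * p.2))
  simp [heatFlow, intervalIntegral_integral_swap uncurry_integrable, translate]

end HeatFlow

section LogSobolevCircle

lemma hasDerivAt_intervalIntegral_of_continuous {F F' : ℝ → ℝ → ℝ} (hF : ∀ r, Continuous (F r))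
    (hF' : Continuous (uncurry F')) (hFF' : ∀ r x, HasDerivAt (fun r => F r x) (F' r x) r)
    (a b s : ℝ) : HasDerivAt (fun r => ∫ x in a..b, F r x) (∫ x in a..b, F' s x) s := by
  obtain ⟨C, hC⟩ := ((isCompact_closedBall s 1).prod (isCompact_uIcc (a := a) (b := b)))
    |>.exists_bound_of_continuousOn hF'.continuousOn
  exact (intervalIntegral.hasDerivAt_integral_of_dominated_loc_of_deriv_le
    (bound := fun _ => C) (Metric.closedBall_mem_nhds s one_pos)
    (.of_forall fun r => (hF r).aestronglyMeasurable) ((hF s).intervalIntegrable a b)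
    (hF'.comp (.prodMk_right s)).aestronglyMeasurable
    (.of_forall fun x hx r hr => hC (r, x) ⟨hr, uIoc_subset_uIcc hx⟩)
    intervalIntegrable_const (.of_forall fun x _ r _ => hFF' r x)).2

lemma le_integral_div_add_of_hasDerivAt {a b L x : ℝ} {u u' : ℝ → ℝ} (hab : a < b)
    (hu : ∀ y ∈ Icc a b, HasDerivAt u (u' y) y) (hL : ∀ y ∈ Icc a b, |u' y| ≤ L)
    (hx : x ∈ Icc a b) : u x ≤ (∫ y in a..b, u y) / (b - a) + L * (b - a) := by
  have L_nonneg : 0 ≤ L := (abs_nonneg _).trans (hL x hx)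
  have u_cont : ContinuousOn u (uIcc a b) := by
    rw [uIcc_of_le hab.le]
    exact fun y hy => (hu y hy).continuousAt.continuousWithinAt
  have lower (y : ℝ) (hy : y ∈ Icc a b) : u x - L * (b - a) ≤ u y := by
    have lipschitz : |u x - u y| ≤ L * |x - y| :=
      (convex_Icc a b).norm_image_sub_le_of_norm_hasDerivWithin_le
        (fun z hz => (hu z hz).hasDerivWithinAt) hL hy hx
    have dist_le : |x - y| ≤ b - a := Real.dist_le_of_mem_Icc hx hy
    linarith [le_abs_self (u x - u y), mul_le_mul_of_nonneg_left dist_le L_nonneg]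
  have integral_lower := intervalIntegral.integral_mono_on (μ := volume) hab.le
    intervalIntegrable_const u_cont.intervalIntegrable lower
  rw [intervalIntegral.integral_const, smul_eq_mul, ← le_div_iff₀' (sub_pos.2 hab)]
    at integral_lower
  linarith

variable {f g : ℝ → ℝ} {T : ℝ}

lemma periodic_deriv (hper : Periodic g T) : Periodic (deriv g) T := fun x => by
  rw [← deriv_comp_add_const, hper.funext]

lemma exists_norm_le_of_periodic (hg : Continuous g) (hT : T ≠ 0) (hper : Periodic g T) :
    ∃ C, ∀ x, ‖g x‖ ≤ C := by
  obtain ⟨C, hC⟩ := (hper.isBounded_of_continuous hT hg).exists_norm_le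
  exact ⟨C, fun x => hC _ (mem_range_self x)⟩

lemma hasDerivAt_heatFlow_of_periodic (hg : ContDiff ℝ 1 g) (hT : T ≠ 0) (hper : Periodic g T)
    (s x : ℝ) : HasDerivAt (heatFlow g s) (heatFlow (deriv g) s x) x :=
  have g'_cont : Continuous (deriv g) := hg.continuous_deriv le_rfl
  hasDerivAt_heatFlow (fun x => (hg.differentiable one_ne_zero x).hasDerivAt) g'_cont
    (exists_norm_le_of_periodic hg.continuous hT hper)
    (exists_norm_le_of_periodic g'_cont hT (periodic_deriv hper)) s x

lemma hasDerivAt_heatFlow_scale_of_periodic (hg : ContDiff ℝ 2 g) (hT : T ≠ 0)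
    (hper : Periodic g T) (s x : ℝ) :
    HasDerivAt (fun r => heatFlow g r x) (s * heatFlow (deriv (deriv g)) s x) s :=
  have hg' : ContDiff ℝ 1 (deriv g) := hg.deriv'
  have g''_cont : Continuous (deriv (deriv g)) := hg'.continuous_deriv le_rfl
  hasDerivAt_heatFlow_scale (fun x => (hg.differentiable two_ne_zero x).hasDerivAt)
    (fun x => (hg'.differentiable one_ne_zero x).hasDerivAt) g''_cont
    (exists_norm_le_of_periodic hg.continuous hT hper)
    (exists_norm_le_of_periodic hg'.continuous hT (periodic_deriv hper))
    (exists_norm_le_of_periodic g''_cont hT (periodic_deriv (periodic_deriv hper))) s x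

lemma continuous_heatFlow_of_periodic (hg : Continuous g) (hT : T ≠ 0) (hper : Periodic g T) :
    Continuous fun p : ℝ × ℝ => heatFlow g p.1 p.2 :=
  continuous_heatFlow hg (exists_norm_le_of_periodic hg hT hper)

lemma heatFlow_pos_of_periodic (hg : Continuous g) (hT : T ≠ 0) (hper : Periodic g T)
    (hpos : ∀ x, 0 < g x) (s x : ℝ) : 0 < heatFlow g s x :=
  heatFlow_pos hg (exists_norm_le_of_periodic hg hT hper) hpos s x

/-- De Bruijn's identity. -/
lemma hasDerivAt_integral_heatFlow_mul_log (hf : ContDiff ℝ 2 f) (hT : T ≠ 0)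
    (hper : Periodic f T) (hpos : ∀ x, 0 < f x) (s : ℝ) :
    HasDerivAt (fun r => ∫ x in 0..T, heatFlow f r x * log (heatFlow f r x))
      (-(s * ∫ x in 0..T, heatFlow (deriv f) s x ^ 2 / heatFlow f s x)) s := by
  have hf' : ContDiff ℝ 1 (deriv f) := hf.deriv'
  have hper' := periodic_deriv hper
  have u_pos := heatFlow_pos_of_periodic hf.continuous hT hper hpos
  have u_ne (p : ℝ × ℝ) : heatFlow f p.1 p.2 ≠ 0 := (u_pos p.1 p.2).ne'
  have u_cont := continuous_heatFlow_of_periodic hf.continuous hT hper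
  have u₂_cont := continuous_heatFlow_of_periodic (hf'.continuous_deriv le_rfl) hT
    (periodic_deriv hper')
  have u_cont_right (r : ℝ) : Continuous (heatFlow f r) := u_cont.comp (.prodMk_right r)
  refine (hasDerivAt_intervalIntegral_of_continuous
    (F' := fun r x => r * (heatFlow (deriv (deriv f)) r x * (log (heatFlow f r x) + 1)))
    (fun r => (u_cont_right r).mul ((u_cont_right r).log fun x => (u_pos r x).ne'))
    (by fun_prop (disch := exact u_ne)) (fun r x => ?_) 0 T s).congr_deriv ?_
  · have hu := hasDerivAt_heatFlow_scale_of_periodic hf hT hper r x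
    refine (hu.mul (hu.log (u_pos r x).ne')).congr_deriv ?_
    field_simp [(u_pos r x).ne']
  · rw [intervalIntegral.integral_const_mul, integral_mul_log_add_one_eq_neg
      (hasDerivAt_heatFlow_of_periodic (hf.of_le one_le_two) hT hper s)
      (hasDerivAt_heatFlow_of_periodic hf' hT hper' s) (u₂_cont.comp (.prodMk_right s)) (u_pos s)
      (periodic_heatFlow hper s).eq.symm (periodic_heatFlow hper' s).eq.symm, mul_neg]

lemma hasDerivAt_integral_heatFlow_sq_div (hf : ContDiff ℝ 3 f) (hT : T ≠ 0)
    (hper : Periodic f T) (hpos : ∀ x, 0 < f x) (s : ℝ) :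
    HasDerivAt (fun r => ∫ x in 0..T, heatFlow (deriv f) r x ^ 2 / heatFlow f r x)
      (s * ∫ x in 0..T, (2 * heatFlow (deriv f) s x * heatFlow (deriv (deriv (deriv f))) s x /
        heatFlow f s x - heatFlow (deriv f) s x ^ 2 * heatFlow (deriv (deriv f)) s x /
        heatFlow f s x ^ 2)) s := by
  have hf' : ContDiff ℝ 2 (deriv f) := hf.deriv'
  have hf'' : ContDiff ℝ 1 (deriv (deriv f)) := hf'.deriv'
  have hper' := periodic_deriv hper
  have hper'' := periodic_deriv hper'
  have u_pos := heatFlow_pos_of_periodic hf.continuous hT hper hpos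
  have u_ne (p : ℝ × ℝ) : heatFlow f p.1 p.2 ≠ 0 := (u_pos p.1 p.2).ne'
  have sq_ne (p : ℝ × ℝ) : heatFlow f p.1 p.2 ^ 2 ≠ 0 := pow_ne_zero 2 (u_ne p)
  have u_cont := continuous_heatFlow_of_periodic hf.continuous hT hper
  have u₁_cont := continuous_heatFlow_of_periodic hf'.continuous hT hper'
  have u₂_cont := continuous_heatFlow_of_periodic hf''.continuous hT hper''
  have u₃_cont := continuous_heatFlow_of_periodic (hf''.continuous_deriv le_rfl) hT
    (periodic_deriv hper'')
  rw [← intervalIntegral.integral_const_mul]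
  refine hasDerivAt_intervalIntegral_of_continuous (F' := fun r x => r *
      (2 * heatFlow (deriv f) r x * heatFlow (deriv (deriv (deriv f))) r x / heatFlow f r x -
        heatFlow (deriv f) r x ^ 2 * heatFlow (deriv (deriv f)) r x / heatFlow f r x ^ 2))
    (fun r => ((u₁_cont.comp (.prodMk_right r)).pow 2).div (u_cont.comp (.prodMk_right r))
      fun x => u_ne (r, x))
    (by fun_prop (disch := first | exact u_ne | exact sq_ne)) (fun r x => ?_) 0 T s
  have hu := hasDerivAt_heatFlow_scale_of_periodic (hf.of_le (by norm_num)) hT hper r x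
  have hu₁ := hasDerivAt_heatFlow_scale_of_periodic hf' hT hper' r x
  refine ((hu₁.pow 2).div hu (u_ne (r, x))).congr_deriv ?_
  have := u_ne (r, x)
  field_simp
  simp only [Pi.pow_apply]
  ring

lemma monotoneOn_integral_heatFlow_mul_log_sub (hf : ContDiff ℝ 3 f) (hT : 0 < T)
    (hper : Periodic f T) (hpos : ∀ x, 0 < f x) :
    MonotoneOn (fun s => (∫ x in 0..T, heatFlow f s x * log (heatFlow f s x)) -
      T ^ 2 / (8 * π ^ 2) * ∫ x in 0..T, heatFlow (deriv f) s x ^ 2 / heatFlow f s x) (Ici 0) := by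
  have hf' : ContDiff ℝ 2 (deriv f) := hf.deriv'
  have hf'' : ContDiff ℝ 1 (deriv (deriv f)) := hf'.deriv'
  have hper' := periodic_deriv hper
  have hper'' := periodic_deriv hper'
  have hderiv (s : ℝ) := (hasDerivAt_integral_heatFlow_mul_log (hf.of_le (by norm_num)) hT.ne'
    hper hpos s).sub ((hasDerivAt_integral_heatFlow_sq_div hf hT.ne' hper hpos s).const_mul
      (T ^ 2 / (8 * π ^ 2)))
  refine monotoneOn_of_hasDerivWithinAt_nonneg (convex_Ici 0)
    (fun s _ => (hderiv s).continuousAt.continuousWithinAt)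
    (fun s _ => (hderiv s).hasDerivWithinAt) fun s hs => ?_
  rw [interior_Ici, mem_Ioi] at hs
  have u₃_cont := continuous_heatFlow_of_periodic (hf''.continuous_deriv le_rfl) hT.ne'
    (periodic_deriv hper'')
  have dissipation := integral_le_neg_mul_integral_sq_div hT
    (hasDerivAt_heatFlow_of_periodic (hf.of_le (by norm_num)) hT.ne' hper s)
    (hasDerivAt_heatFlow_of_periodic (hf'.of_le one_le_two) hT.ne' hper' s)
    (hasDerivAt_heatFlow_of_periodic hf'' hT.ne' hper'' s) (u₃_cont.comp (.prodMk_right s))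
    (heatFlow_pos_of_periodic hf.continuous hT.ne' hper hpos s)
    (periodic_heatFlow hper s).eq.symm (periodic_heatFlow hper' s).eq.symm
    (periodic_heatFlow hper'' s).eq.symm
  have scaled := mul_le_mul_of_nonneg_left dissipation
    (show 0 ≤ s * (T ^ 2 / (8 * π ^ 2)) by positivity)
  have cancel : T ^ 2 / (8 * π ^ 2) * (2 * (2 * π / (T - 0)) ^ 2) = 1 := by
    rw [sub_zero]
    field_simp
    norm_num
  linear_combination scaled - cancel *
    (s * ∫ x in 0..T, heatFlow (deriv f) s x ^ 2 / heatFlow f s x)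

lemma exists_integral_heatFlow_mul_log_le (hf : ContDiff ℝ 1 f) (hT : 0 < T) (hper : Periodic f T)
    (hpos : ∀ x, 0 < f x) : ∃ K, ∀ s > 0,
      ∫ x in 0..T, heatFlow f s x * log (heatFlow f s x) ≤
        (∫ x in 0..T, f x) * log ((∫ x in 0..T, f x) / T + K / s) := by
  have f'_cont : Continuous (deriv f) := hf.continuous_deriv le_rfl
  have f_bdd := exists_norm_le_of_periodic hf.continuous hT.ne' hper
  obtain ⟨K, hK⟩ := exists_abs_mul_heatFlow_le
    (fun x => (hf.differentiable one_ne_zero x).hasDerivAt) f'_cont f_bdd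
    (exists_norm_le_of_periodic f'_cont hT.ne' (periodic_deriv hper))
  refine ⟨K * T, fun s hs => ?_⟩
  have mass : ∫ x in 0..T, heatFlow f s x = ∫ x in 0..T, f x := by
    simpa using integral_heatFlow_of_periodic hf.continuous f_bdd hper s 0
  have u_pos := heatFlow_pos_of_periodic hf.continuous hT.ne' hper hpos s
  have u_cont : Continuous (heatFlow f s) :=
    (continuous_heatFlow_of_periodic hf.continuous hT.ne' hper).comp (.prodMk_right s)
  have upper (x : ℝ) (hx : x ∈ Icc 0 T) :
      heatFlow f s x ≤ (∫ x in 0..T, f x) / T + K * T / s := by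
    have := le_integral_div_add_of_hasDerivAt hT
      (fun y _ => hasDerivAt_heatFlow_of_periodic hf hT.ne' hper s y) (L := K / s)
      (fun y _ => (le_div_iff₀' hs).2 (by simpa [abs_mul, abs_of_pos hs] using hK s y)) hx
    rwa [mass, sub_zero, div_mul_eq_mul_div] at this
  rw [← mass, ← intervalIntegral.integral_mul_const]
  refine intervalIntegral.integral_mono_on hT.le
    ((u_cont.mul (u_cont.log fun x => (u_pos x).ne')).intervalIntegrable _ _)
    ((u_cont.mul continuous_const).intervalIntegrable _ _) fun x hx => ?_
  rw [mass]
  gcongr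
  exacts [(u_pos x).le, u_pos x, upper x hx]

theorem integral_mul_log_le_of_periodic (hf : ContDiff ℝ 3 f) (hT : 0 < T) (hper : Periodic f T)
    (hpos : ∀ x, 0 < f x) :
    ∫ x in 0..T, f x * log (f x) ≤ (∫ x in 0..T, f x) * log ((∫ x in 0..T, f x) / T) +
      T ^ 2 / (8 * π ^ 2) * ∫ x in 0..T, deriv f x ^ 2 / f x := by
  have hf₁ : ContDiff ℝ 1 f := hf.of_le (by norm_num)
  obtain ⟨K, hK⟩ := exists_integral_heatFlow_mul_log_le hf₁ hT hper hpos
  have mass_pos : 0 < ∫ x in 0..T, f x :=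
    intervalIntegral.intervalIntegral_pos_of_pos (hf.continuous.intervalIntegrable _ _) hpos hT
  have limit : Tendsto (fun s => (∫ x in 0..T, f x) * log ((∫ x in 0..T, f x) / T + K / s)) atTop
      (nhds ((∫ x in 0..T, f x) * log ((∫ x in 0..T, f x) / T))) := by
    have : Tendsto (fun s => (∫ x in 0..T, f x) / T + K / s) atTop
        (nhds ((∫ x in 0..T, f x) / T + 0)) :=
      tendsto_const_nhds.add (tendsto_const_nhds.div_atTop tendsto_id)
    rw [add_zero] at this
    exact (this.log (by positivity)).const_mul _
  rw [← sub_le_iff_le_add]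
  refine ge_of_tendsto limit (eventually_gt_atTop 0 |>.mono fun s hs => ?_)
  have fisher_nonneg : 0 ≤ ∫ x in 0..T, heatFlow (deriv f) s x ^ 2 / heatFlow f s x :=
    intervalIntegral.integral_nonneg hT.le fun x _ =>
      div_nonneg (sq_nonneg _) (heatFlow_pos_of_periodic hf.continuous hT.ne' hper hpos s x).le
  have mono := monotoneOn_integral_heatFlow_mul_log_sub hf hT hper hpos self_mem_Ici hs.le hs.le
  simp only [heatFlow_zero] at mono
  exact mono.trans ((sub_le_self _ (by positivity)).trans (hK s hs))

theorem entropy_restrict_Icc_le_of_periodic (hf : ContDiff ℝ 3 f) (hper : Periodic f 1)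
    (hpos : ∀ x, 0 < f x) :
    entropy (volume.restrict (Icc 0 1)) f ≤
      1 / (8 * π ^ 2) * ∫ x in Icc 0 1, deriv f x ^ 2 / f x := by
  have := integral_mul_log_le_of_periodic hf one_pos hper hpos
  simp only [intervalIntegral.integral_of_le zero_le_one, ← integral_Icc_eq_integral_Ioc, div_one,
    one_pow] at this
  rw [entropy]
  linarith

end LogSobolevCircle

section LogSobolevCube

lemma volume_restrict_Icc_eq_pi {ι : Type*} [Fintype ι] (a b : ι → ℝ) :
    (volume : Measure (ι → ℝ)).restrict (Icc a b) =
      Measure.pi fun i => volume.restrict (Icc (a i) (b i)) := by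
  rw [← pi_univ_Icc, volume_pi, Measure.restrict_pi_pi]

instance isProbabilityMeasure_volume_restrict_Icc_zero_one :
    IsProbabilityMeasure ((volume : Measure ℝ).restrict (Icc 0 1)) := ⟨by simp⟩

instance isProbabilityMeasure_volume_restrict_Icc_zero_one_pi {ι : Type*} [Fintype ι] :
    IsProbabilityMeasure ((volume : Measure (ι → ℝ)).restrict (Icc 0 1)) := by
  rw [volume_restrict_Icc_eq_pi]
  exact inferInstanceAs (IsProbabilityMeasure (Measure.pi fun _ => volume.restrict (Icc 0 1)))

lemma exists_pos_forall_mem_Icc_of_periodic {ι : Type*} {f : (ι → ℝ) → ℝ} (hf : Continuous f)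
    (hper : ∀ (k : ι → ℤ) x, f (x + fun i => (k i : ℝ)) = f x) (hpos : ∀ x, 0 < f x) :
    ∃ c > 0, ∃ C, ∀ x, f x ∈ Icc c C := by
  have cube_nonempty : (Icc (0 : ι → ℝ) 1).Nonempty := nonempty_Icc.2 zero_le_one
  obtain ⟨x₀, -, hmin⟩ := isCompact_Icc.exists_isMinOn cube_nonempty hf.continuousOn
  obtain ⟨x₁, -, hmax⟩ := isCompact_Icc.exists_isMaxOn cube_nonempty hf.continuousOn
  refine ⟨f x₀, hpos x₀, f x₁, fun x => ?_⟩
  have fract_mem : (fun i => Int.fract (x i)) ∈ Icc (0 : ι → ℝ) 1 :=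
    ⟨fun i => Int.fract_nonneg (x i), fun i => (Int.fract_lt_one (x i)).le⟩
  have fract_eq : f x = f fun i => Int.fract (x i) := by
    rw [← hper (fun i => ⌊x i⌋) fun i => Int.fract (x i)]
    congr 1 with i
    exact (Int.fract_add_floor (x i)).symm
  exact fract_eq ▸ ⟨hmin fract_mem, hmax fract_mem⟩

lemma periodic_comp_update {ι α : Type*} [DecidableEq ι] {f : (ι → ℝ) → α}
    (hper : ∀ (k : ι → ℤ) x, f (x + fun i => (k i : ℝ)) = f x) (x : ι → ℝ) (i : ι) :
    Periodic (fun t => f (update x i t)) 1 := fun t => by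
  dsimp only
  rw [← hper (Pi.single i 1) (update x i t)]
  congr 1 with j
  rcases eq_or_ne j i with rfl | hj
  · simp
  · simp [hj]

lemma deriv_comp_update {ι : Type*} [Finite ι] [DecidableEq ι] {f : (ι → ℝ) → ℝ}
    (hf : Differentiable ℝ f) (x : ι → ℝ) (i : ι) (t : ℝ) :
    deriv (fun t => f (update x i t)) t = fderiv ℝ f (update x i t) (Pi.single i 1) :=
  have := Fintype.ofFinite ι
  ((hf _).hasFDerivAt.comp_hasDerivAt t (hasDerivAt_update x i t)).deriv

variable {d : ℕ} {f : (Fin d → ℝ) → ℝ}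

lemma entropy_comp_update_le (hf : ContDiff ℝ 3 f)
    (hper : ∀ (k : Fin d → ℤ) x, f (x + fun i => (k i : ℝ)) = f x) (hpos : ∀ x, 0 < f x)
    (x : Fin d → ℝ) (i : Fin d) :
    entropy (volume.restrict (Icc 0 1)) (fun t => f (update x i t)) ≤
      1 / (8 * π ^ 2) * ∫ t in Icc 0 1,
        fderiv ℝ f (update x i t) (Pi.single i 1) ^ 2 / f (update x i t) := by
  simp only [← deriv_comp_update (hf.differentiable three_ne_zero)]
  exact entropy_restrict_Icc_le_of_periodic (hf.comp (contDiff_update 3 x i))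
    (periodic_comp_update hper x i) fun t => hpos _

theorem entropy_restrict_Icc_zero_one_le (hf : ContDiff ℝ 3 f)
    (hper : ∀ (k : Fin d → ℤ) x, f (x + fun i => (k i : ℝ)) = f x) (hpos : ∀ x, 0 < f x) :
    entropy (volume.restrict (Icc 0 1)) f ≤
      1 / (8 * π ^ 2) * ∫ x in Icc 0 1, (∑ i, fderiv ℝ f x (Pi.single i 1) ^ 2) / f x := by
  obtain ⟨c, hc, C, hfb⟩ := exists_pos_forall_mem_Icc_of_periodic hf.continuous hper hpos
  have f_ne (x : Fin d → ℝ) : f x ≠ 0 := (hpos x).ne'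
  have f'_cont : Continuous (fderiv ℝ f) := hf.continuous_fderiv three_ne_zero
  let μ : Fin d → Measure ℝ := fun _ => volume.restrict (Icc 0 1)
  have cube_eq : volume.restrict (Icc 0 1) = Measure.pi μ := volume_restrict_Icc_eq_pi 0 1
  rw [cube_eq]
  have partial_integrable (i : Fin d) :
      Integrable (fun x => fderiv ℝ f x (Pi.single i 1) ^ 2 / f x) (Measure.pi μ) := by
    rw [← cube_eq]
    exact ContinuousOn.integrableOn_compact isCompact_Icc (Continuous.continuousOn
      (by fun_prop (disch := exact f_ne)))
  have coordinate (i : Fin d) : ∫ x, entropy (μ i) (fun t => f (update x i t)) ∂Measure.pi μ ≤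
      1 / (8 * π ^ 2) * ∫ x, fderiv ℝ f x (Pi.single i 1) ^ 2 / f x ∂Measure.pi μ := by
    rw [← integral_integral_update μ i (partial_integrable i), ← integral_const_mul]
    refine integral_mono_of_nonneg (.of_forall fun x => ?_)
      (((measurePreserving_update μ i).integrable_comp_of_integrable
        (partial_integrable i)).integral_prod_left.const_mul _)
      (.of_forall fun x => entropy_comp_update_le hf hper hpos x i)
    have slice_cont : Continuous fun t => f (update x i t) := hf.continuous.comp (by fun_prop)
    exact entropy_nonneg (slice_cont.integrableOn_Icc)
      ((slice_cont.mul (slice_cont.log fun t => f_ne _)).integrableOn_Icc) fun t => (hpos _).le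
  calc entropy (Measure.pi μ) f
      ≤ ∑ i, ∫ x, entropy (μ i) (fun t => f (update x i t)) ∂Measure.pi μ :=
        entropy_pi_le μ hc hf.continuous.measurable hfb
    _ ≤ ∑ i, 1 / (8 * π ^ 2) * ∫ x, fderiv ℝ f x (Pi.single i 1) ^ 2 / f x ∂Measure.pi μ :=
        Finset.sum_le_sum fun i _ => coordinate i
    _ = 1 / (8 * π ^ 2) *
          ∫ x, (∑ i, fderiv ℝ f x (Pi.single i 1) ^ 2) / f x ∂Measure.pi μ := by
        simp only [Finset.sum_div]
        rw [integral_finsetSum _ fun i _ => partial_integrable i, Finset.mul_sum]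

end LogSobolevCube

section Density

variable {α : Type*} [MeasurableSpace α] {μ : Measure α} {ρ : α → ℝ} {a b : ℝ}

lemma withDensity_ofReal_le_smul (hρ : ∀ᵐ x ∂μ, ρ x ≤ b) :
    μ.withDensity (fun x => ENNReal.ofReal (ρ x)) ≤ b.toNNReal • μ := by
  refine (withDensity_mono (hρ.mono fun x hx => ENNReal.ofReal_le_ofReal hx)).trans_eq ?_
  exact withDensity_const _

lemma isProbabilityMeasure_withDensity_ofReal (hρ : 0 ≤ᵐ[μ] ρ) (hρ1 : ∫ x, ρ x ∂μ = 1) :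
    IsProbabilityMeasure (μ.withDensity fun x => ENNReal.ofReal (ρ x)) := by
  have hρint : Integrable ρ μ := .of_integral_ne_zero (hρ1 ▸ one_ne_zero)
  constructor
  rw [withDensity_apply _ .univ, setLIntegral_univ,
    ← ofReal_integral_eq_lintegral_ofReal hρint hρ, hρ1, ENNReal.ofReal_one]

lemma integral_withDensity_ofReal (hρmeas : AEMeasurable ρ μ) (hρ : 0 ≤ᵐ[μ] ρ) (g : α → ℝ) :
    ∫ x, g x ∂μ.withDensity (fun x => ENNReal.ofReal (ρ x)) = ∫ x, g x * ρ x ∂μ := by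
  rw [integral_withDensity_eq_integral_toReal_smul₀ hρmeas.ennreal_ofReal
    (.of_forall fun _ => ENNReal.ofReal_lt_top)]
  refine integral_congr_ae (hρ.mono fun x hx => ?_)
  dsimp only
  rw [ENNReal.toReal_ofReal hx, smul_eq_mul, mul_comm]

lemma mul_integral_le_integral_mul (hρmeas : AEStronglyMeasurable ρ μ)
    (hρ : ∀ᵐ x ∂μ, ρ x ∈ Icc a b) {g : α → ℝ} (hg : Integrable g μ) (hg0 : 0 ≤ᵐ[μ] g) :
    a * ∫ x, g x ∂μ ≤ ∫ x, g x * ρ x ∂μ := by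
  have hgρ : Integrable (fun x => g x * ρ x) μ :=
    hg.mul_bdd hρmeas (hρ.mono fun x hx => abs_le_max_abs_abs hx.1 hx.2)
  rw [← integral_const_mul]
  refine integral_mono_ae (hg.const_mul a) hgρ ?_
  filter_upwards [hρ, hg0] with x hx hgx
  rw [mul_comm]
  exact mul_le_mul_of_nonneg_left hx.1 hgx

lemma entropy_withDensity_ofReal (hρmeas : AEMeasurable ρ μ) (hρ : 0 ≤ᵐ[μ] ρ) (f : α → ℝ) :
    entropy (μ.withDensity fun x => ENNReal.ofReal (ρ x)) f =
      ∫ x, f x * log (f x) * ρ x ∂μ - (∫ x, f x * ρ x ∂μ) * log (∫ x, f x * ρ x ∂μ) := by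
  simp only [entropy, integral_withDensity_ofReal hρmeas hρ]

lemma entropy_withDensity_ofReal_le [IsProbabilityMeasure μ] (ha : 0 < a)
    (hρ : ∀ᵐ x ∂μ, ρ x ∈ Icc a b) (hρ1 : ∫ x, ρ x ∂μ = 1) {f g : α → ℝ} (hf : Integrable f μ)
    (hflog : Integrable (fun x => f x * log (f x)) μ) (hpos : ∀ x, 0 < f x)
    (hg : Integrable g μ) (hg0 : 0 ≤ᵐ[μ] g) {K : ℝ} (hK : 0 ≤ K)
    (hent : entropy μ f ≤ K * ∫ x, g x ∂μ) :
    entropy (μ.withDensity fun x => ENNReal.ofReal (ρ x)) f ≤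
      b / a * K * ∫ x, g x * ρ x ∂μ := by
  have hρint : Integrable ρ μ := .of_integral_ne_zero (hρ1 ▸ one_ne_zero)
  have hb : 0 ≤ b := by
    obtain ⟨x, hx⟩ := hρ.exists
    exact ha.le.trans (hx.1.trans hx.2)
  have := isProbabilityMeasure_withDensity_ofReal (hρ.mono fun x hx => ha.le.trans hx.1) hρ1
  calc entropy (μ.withDensity fun x => ENNReal.ofReal (ρ x)) f ≤ b * entropy μ f := by
        simpa only [coe_toNNReal b hb] using entropy_le_mul_of_measure_le_smul
          (withDensity_ofReal_le_smul (hρ.mono fun x hx => hx.2)) hf hflog hpos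
    _ ≤ b * (K * ∫ x, g x ∂μ) := by gcongr
    _ = b / a * K * (a * ∫ x, g x ∂μ) := by field_simp
    _ ≤ b / a * K * ∫ x, g x * ρ x ∂μ := by
        gcongr
        exact mul_integral_le_integral_mul hρint.aestronglyMeasurable hρ hg hg0

end Density

theorem density_logSobolev_general {d : ℕ} {a b : ℝ} (ha : 0 < a) {ρ f : (Fin d → ℝ) → ℝ}
    (hρ : ∀ᵐ x ∂volume.restrict (Icc 0 1), ρ x ∈ Icc a b) (hρ1 : ∫ x in Icc 0 1, ρ x = 1)
    (hf : ContDiff ℝ 3 f) (hper : ∀ (k : Fin d → ℤ) x, f (x + fun i => (k i : ℝ)) = f x)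
    (hpos : ∀ x, 0 < f x) :
    (∫ x in Icc 0 1, f x * log (f x) * ρ x) -
        (∫ x in Icc 0 1, f x * ρ x) * log (∫ x in Icc 0 1, f x * ρ x) ≤
      b / a / (8 * π ^ 2) *
        ∫ x in Icc 0 1, (∑ i, fderiv ℝ f x (Pi.single i 1) ^ 2) / f x * ρ x := by
  have f_ne (x : Fin d → ℝ) : f x ≠ 0 := (hpos x).ne'
  have f_cont : Continuous f := hf.continuous
  have f'_cont : Continuous (fderiv ℝ f) := hf.continuous_fderiv three_ne_zero
  have integrable_of_continuous {g : (Fin d → ℝ) → ℝ} (hg : Continuous g) :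
      Integrable g (volume.restrict (Icc 0 1)) :=
    hg.continuousOn.integrableOn_compact isCompact_Icc
  have hρint : IntegrableOn ρ (Icc 0 1) := .of_integral_ne_zero (hρ1 ▸ one_ne_zero)
  rw [div_eq_mul_one_div (b / a), ← entropy_withDensity_ofReal hρint.aemeasurable
    (hρ.mono fun x hx => ha.le.trans hx.1)]
  exact entropy_withDensity_ofReal_le ha hρ hρ1 (integrable_of_continuous f_cont)
    (integrable_of_continuous (f_cont.mul (f_cont.log f_ne))) hpos
    (integrable_of_continuous (by fun_prop (disch := exact f_ne)))
    (.of_forall fun x => by have := hpos x; positivity) (by positivity)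
    (entropy_restrict_Icc_zero_one_le hf hper hpos)

/-- a probability density `ρ` on the torus `T^d` with `1/λ ≤ ρ ≤ λ`
satisfies a logarithmic Sobolev inequality with constant `λ²/(8π²)`.
The torus is modeled by `ℤ^d`-periodic functions on `ℝ^d` and densities are with
respect to Lebesgue measure on `[0,1]^d`. -/
theorem density_logSobolev (d : ℕ) (lam : ℝ) (hlam : 1 < lam)
    (ρ : (Fin d → ℝ) → ℝ)
    (hρ_meas : Measurable ρ)
    (hρ_per : ∀ (k : Fin d → ℤ) (x : Fin d → ℝ), ρ (x + fun i => (k i : ℝ)) = ρ x)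
    (hρ_bounds : ∀ x, 1 / lam ≤ ρ x ∧ ρ x ≤ lam)
    (hρ_prob : ∫ x in Set.Icc (0 : Fin d → ℝ) 1, ρ x = 1)
    (f : (Fin d → ℝ) → ℝ)
    (hf_smooth : ContDiff ℝ (⊤ : ℕ∞) f)
    (hf_per : ∀ (k : Fin d → ℤ) (x : Fin d → ℝ), f (x + fun i => (k i : ℝ)) = f x)
    (hf_pos : ∀ x, 0 < f x) :
    (∫ x in Set.Icc (0 : Fin d → ℝ) 1, f x * Real.log (f x) * ρ x) -
        (∫ x in Set.Icc (0 : Fin d → ℝ) 1, f x * ρ x) *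
          Real.log (∫ x in Set.Icc (0 : Fin d → ℝ) 1, f x * ρ x) ≤
      (lam ^ 2 / (8 * π ^ 2)) *
        ∫ x in Set.Icc (0 : Fin d → ℝ) 1,
          ((∑ α, (fderiv ℝ f x (Pi.single α 1)) ^ 2) / f x) * ρ x := by
  rw [show lam ^ 2 / (8 * π ^ 2) = lam / (1 / lam) / (8 * π ^ 2) by field_simp]
  exact density_logSobolev_general (by positivity) (.of_forall hρ_bounds) hρ_prob
    (contDiff_infty.1 hf_smooth 3) hf_per hf_pos

end
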